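/- arXiv:2506.02318 — 2 statements merged into one kernel-verified Lean document; each statement's English description precedes it below -/
import Mathlib

section
/- For every y ∈ X and every t : ℝ, the function u ↦ q_u y has derivative at t equal to (∑_{j : Fin d, y j = m} ∑_{a : Fin S, a ≠ m} q_t (y[j ↦ a])) − (d − m̄(y)) · q_t y. That is, the forward marginals of the absorbing diffusion satisfy the Kolmogorov forward equation d/dt q_t(y) = ∑_{x} Q(x, y) q_t(x), where the only states x ≠ y with Q(x, y) > 0 are those obtained from y by replacing one masked coordinate by a non-mask token (with rate 1), and Q(y, y) = −(d − m̄(y)). -/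
open Finset

/-- Per-token absorbing transition kernel. -/
noncomputable def absK (S : ℕ) (m : Fin S) (t : ℝ) (a b : Fin S) : ℝ :=
  if a = b then (if a = m then 1 else Real.exp (-t))
  else (if b = m then 1 - Real.exp (-t) else 0)

/-- Forward marginal at time `t` of the absorbing diffusion started at `q0`. -/
noncomputable def fwd (S d : ℕ) (m : Fin S) (q0 : (Fin d → Fin S) → ℝ) (t : ℝ)
    (x : Fin d → Fin S) : ℝ :=
  ∑ x0 : Fin d → Fin S, q0 x0 * ∏ i : Fin d, absK S m t (x0 i) (x i)

/-- Number of masked coordinates. -/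
def nmask (S d : ℕ) (m : Fin S) (x : Fin d → Fin S) : ℕ :=
  (Finset.univ.filter (fun i => x i = m)).card

/-!
A single token started at `a` has law `δ_m + exp (-t) • (δ_a - δ_m)`, which solves the linear
equation `p' = p Q` for the rate matrix `Q a = δ_m - δ_a`. By the Leibniz rule, a product of
solutions of such equations solves the equation of the product chain, in which one coordinate jumps
at a time; that equation is linear, so it passes to mixtures over the initial state. Since
`p Q = (∑ a, p a) • δ_m - p`, a masked coordinate of `y` gains the mass of its non-mask
replacements and an unmasked one loses mass at rate `1`.
-/

open scoped Matrix

section ProductChain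

variable {ι R : Type*} [Fintype ι] [DecidableEq ι] {α : ι → Type*}

theorem prod_apply_update [CommMonoid R] (p : ∀ i, α i → R) (y : ∀ i, α i) (j : ι) (a : α j) :
    ∏ i, p i (Function.update y j a i) = (∏ i ∈ univ.erase j, p i (y i)) * p j a := by
  simp only [Function.apply_update p, prod_update_of_mem (mem_univ j), sdiff_singleton_eq_erase,
    mul_comm]

variable [∀ i, Fintype (α i)]

/-- The forward operator `p ↦ p Q` of the product Markov chain whose coordinates jump independently,
coordinate `j` with rate matrix `Q j`. Entries `Q j a b` are rates from `a` to `b`, so measures are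
row vectors. -/
def prodForward [Semiring R] (Q : ∀ i, Matrix (α i) (α i) R) :
    ((∀ i, α i) → R) →ₗ[R] ((∀ i, α i) → R) where
  toFun p y := ∑ j, ((fun a => p (Function.update y j a)) ᵥ* Q j) (y j)
  map_add' p q := by
    ext y
    simp only [Matrix.vecMul, dotProduct, Pi.add_apply, add_mul, sum_add_distrib]
  map_smul' c p := by
    ext y
    simp only [Matrix.vecMul, dotProduct, Pi.smul_apply, smul_eq_mul, mul_assoc, mul_sum,
      RingHom.id_apply]

theorem prodForward_apply [Semiring R] (Q : ∀ i, Matrix (α i) (α i) R) (p : (∀ i, α i) → R)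
    (y : ∀ i, α i) :
    prodForward Q p y = ∑ j, ((fun a => p (Function.update y j a)) ᵥ* Q j) (y j) :=
  rfl

theorem prodForward_prod [CommSemiring R] (Q : ∀ i, Matrix (α i) (α i) R) (p : ∀ i, α i → R)
    (y : ∀ i, α i) :
    prodForward Q (fun x => ∏ i, p i (x i)) y =
      ∑ j, (∏ i ∈ univ.erase j, p i (y i)) * (p j ᵥ* Q j) (y j) := by
  simp only [prodForward_apply, prod_apply_update, Matrix.vecMul, dotProduct, mul_sum, mul_assoc]

theorem hasDerivAt_prod_of_vecMul {𝕜 : Type*} [NontriviallyNormedField 𝕜] [NormedCommRing R]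
    [NormedAlgebra 𝕜 R] {Q : ∀ i, Matrix (α i) (α i) R} {p : ∀ i, 𝕜 → α i → R} {t : 𝕜}
    (hp : ∀ i, HasDerivAt (p i) (p i t ᵥ* Q i) t) :
    HasDerivAt (fun u (x : ∀ i, α i) => ∏ i, p i u (x i))
      (prodForward Q fun x => ∏ i, p i t (x i)) t := by
  refine hasDerivAt_pi.2 fun y => ?_
  rw [prodForward_prod]
  exact HasDerivAt.fun_finsetProd fun i _ => hasDerivAt_pi.1 (hp i) (y i)

end ProductChain

section AbsorbingRate

variable {α R : Type*} [DecidableEq α]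

/-- The rate matrix of the absorbing chain on one token: from every state, jump to the mask `m` at
rate `1`. The row of `m` vanishes, since there the jump changes nothing. -/
def absorbingRate [Ring R] (m : α) : Matrix α α R :=
  Matrix.of fun a => Pi.single m 1 - Pi.single a 1

variable [Fintype α]

theorem vecMul_absorbingRate [Ring R] (m : α) (p : α → R) :
    p ᵥ* absorbingRate m = Pi.single m (∑ a, p a) - p := by
  ext b
  simp [absorbingRate, Matrix.vecMul, dotProduct, mul_sub, sum_sub_distrib, Pi.single_apply]

theorem vecMul_absorbingRate_apply [Ring R] (m : α) (p : α → R) (b : α) :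
    (p ᵥ* absorbingRate m) b = if b = m then ∑ a with a ≠ m, p a else -p b := by
  rw [vecMul_absorbingRate, Pi.sub_apply, Pi.single_apply]
  split_ifs with h
  · rw [h, filter_ne', sum_erase_eq_sub (mem_univ m)]
  · rw [zero_sub]

theorem prodForward_absorbingRate_apply {ι : Type*} [Fintype ι] [DecidableEq ι] [Ring R] (m : α)
    (p : (ι → α) → R) (y : ι → α) :
    prodForward (fun _ => absorbingRate m) p y =
      (∑ j with y j = m, ∑ a with a ≠ m, p (Function.update y j a)) -
        ((Fintype.card ι : R) - (#{j | y j = m} : R)) * p y := by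
  have card_unmasked : (Fintype.card ι : R) - (#{j | y j = m} : R) = (#{j | y j ≠ m} : R) := by
    rw [sub_eq_iff_eq_add', ← Nat.cast_add, card_filter_add_card_filter_not, card_univ]
  simp only [prodForward_apply, vecMul_absorbingRate_apply, Function.update_eq_self, sum_ite,
    sum_const, nsmul_eq_mul, mul_neg, card_unmasked, sub_eq_add_neg]

end AbsorbingRate

theorem absK_eq_single_add_smul (S : ℕ) (m : Fin S) (t : ℝ) (a : Fin S) :
    absK S m t a = Pi.single m 1 + Real.exp (-t) • (Pi.single a 1 - Pi.single m 1) := by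
  ext b
  simp only [absK, Pi.add_apply, Pi.smul_apply, Pi.sub_apply, Pi.single_apply, smul_eq_mul]
  grind

theorem hasDerivAt_absK (S : ℕ) (m : Fin S) (t : ℝ) (a : Fin S) :
    HasDerivAt (fun u => absK S m u a) (absK S m t a ᵥ* absorbingRate m) t := by
  have hexp : HasDerivAt (fun u : ℝ => Real.exp (-u)) (-Real.exp (-t)) t := by
    simpa using (hasDerivAt_neg t).exp
  have hmass : ∑ b, absK S m t a b = 1 := by
    simp [absK_eq_single_add_smul, sum_add_distrib, ← mul_sum]
  rw [vecMul_absorbingRate, hmass]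
  simp only [absK_eq_single_add_smul, sub_add_cancel_left, ← neg_smul]
  exact (hexp.smul_const _).const_add _

theorem fwd_eq_sum_smul (S d : ℕ) (m : Fin S) (q0 : (Fin d → Fin S) → ℝ) (t : ℝ) :
    fwd S d m q0 t = ∑ x0, q0 x0 • fun x => ∏ i, absK S m t (x0 i) (x i) := by
  ext x
  simp only [fwd, Finset.sum_apply, Pi.smul_apply, smul_eq_mul]

theorem hasDerivAt_fwd (S d : ℕ) (m : Fin S) (q0 : (Fin d → Fin S) → ℝ) (t : ℝ) :
    HasDerivAt (fwd S d m q0)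
      (prodForward (fun _ => absorbingRate m) (fwd S d m q0 t)) t := by
  rw [funext (fwd_eq_sum_smul S d m q0), map_sum]
  simp only [map_smul]
  exact HasDerivAt.fun_sum fun x0 _ =>
    (hasDerivAt_prod_of_vecMul fun i => hasDerivAt_absK S m t (x0 i)).const_smul (q0 x0)

theorem absorbing_kolmogorov_forward_general (S d : ℕ) (m : Fin S)
    (q0 : (Fin d → Fin S) → ℝ) (y : Fin d → Fin S) (t : ℝ) :
    HasDerivAt (fun u : ℝ => fwd S d m q0 u y)
      ((∑ j with y j = m, ∑ a with a ≠ m, fwd S d m q0 t (Function.update y j a))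
        - ((d : ℝ) - (nmask S d m y : ℝ)) * fwd S d m q0 t y) t := by
  have hy := hasDerivAt_pi.1 (hasDerivAt_fwd S d m q0 t) y
  rwa [prodForward_absorbingRate_apply, Fintype.card_fin] at hy

/-- Kolmogorov forward equation for the absorbing-rate forward marginals. -/
theorem absorbing_kolmogorov_forward (S d : ℕ) (hS : 2 ≤ S) (hd : 1 ≤ d) (m : Fin S)
    (q0 : (Fin d → Fin S) → ℝ) (hq0 : ∀ x, 0 ≤ q0 x)
    (hq0sum : ∑ x : Fin d → Fin S, q0 x = 1) :
    ∀ (y : Fin d → Fin S) (t : ℝ),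
      HasDerivAt (fun u : ℝ => fwd S d m q0 u y)
        ((∑ j ∈ Finset.univ.filter (fun j : Fin d => y j = m),
            ∑ a ∈ Finset.univ.filter (fun a : Fin S => a ≠ m),
              fwd S d m q0 t (Function.update y j a))
          - ((d : ℝ) - (nmask S d m y : ℝ)) * fwd S d m q0 t y) t :=
  absorbing_kolmogorov_forward_general S d m q0
end

section
/- For every t ≥ 0, the negative entropy of the forward marginal satisfies the Jensen-type bound ∑_{x ∈ X, q_t x > 0} q_t x · Real.log (q_t x) ≤ (∑_{i : Fin d} (1 − q̄_i)) · (−t · exp(−t) + (1 − exp(−t)) · Real.log (1 − exp(−t))), where q̄_i := ∑_{x0 ∈ X, x0 i = m} q0 x0 is the probability under q0 that coordinate i is masked, and by convention (1 − exp(−t)) · log(1 − exp(−t)) = 0 when t = 0. -/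
open Finset

/-!
The marginal `fwd` is the `q0`-mixture of the laws `condFwd x0` of the sequence started at `x0`.
Entropy is concave, so the entropy of the marginal is at least the `q0`-average of the entropies of
the `condFwd x0`. Given `x0` the tokens are independent, so their entropies add: a masked token is
frozen and contributes nothing, and any other token survives with probability `exp (-t)`, and so
contributes `binEntropy (exp (-t))`. Averaging over `q0` leaves this constant times the expected
number of unmasked tokens.
-/

open Real (negMulLog binEntropy)

section Entropy

/-- The Shannon entropy, in nats, of a weight function on a finite type. The weights need not
sum to one. -/
noncomputable def shannonEntropy {α : Type*} [Fintype α] (p : α → ℝ) : ℝ :=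
  ∑ a, negMulLog (p a)

theorem sum_filter_pos_mul_log {α : Type*} [Fintype α] {p : α → ℝ} (hp : 0 ≤ p) :
    ∑ a with 0 < p a, p a * Real.log (p a) = -shannonEntropy p := by
  have support_pos : ∀ a ∈ univ, p a * Real.log (p a) ≠ 0 → 0 < p a := fun a _ h =>
    (hp a).lt_of_ne' (left_ne_zero_of_mul h)
  simp only [sum_filter_of_ne support_pos, shannonEntropy, negMulLog, neg_mul, sum_neg_distrib,
    neg_neg]

theorem concaveOn_shannonEntropy {α : Type*} [Fintype α] :
    ConcaveOn ℝ (Set.Ici 0) (shannonEntropy : (α → ℝ) → ℝ) := by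
  refine ⟨convex_Ici 0, fun p hp r hr a b ha hb hab => ?_⟩
  simp only [shannonEntropy, smul_sum, ← sum_add_distrib]
  exact sum_le_sum fun x _ => Real.concaveOn_negMulLog.2 (hp x) (hr x) ha hb hab

theorem negMulLog_prod {ι : Type*} [DecidableEq ι] (s : Finset ι) (f : ι → ℝ) :
    negMulLog (∏ i ∈ s, f i) = ∑ i ∈ s, negMulLog (f i) * ∏ j ∈ s.erase i, f j := by
  induction s using Finset.induction_on with
  | empty => simp only [prod_empty, sum_empty, Real.negMulLog_one]
  | insert a s ha ih =>
    have prod_erase_insert : ∀ i ∈ s,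
        ∏ j ∈ (insert a s).erase i, f j = f a * ∏ j ∈ s.erase i, f j := fun i hi => by
      rw [erase_insert_of_ne (ne_of_mem_of_not_mem hi ha).symm,
        prod_insert (notMem_mono (erase_subset i s) ha)]
    rw [prod_insert ha, Real.negMulLog_mul, ih, sum_insert ha, erase_insert ha, mul_sum,
      mul_comm (∏ i ∈ s, f i)]
    congr 1
    exact sum_congr rfl fun i hi => by rw [prod_erase_insert i hi, mul_left_comm]

variable {ι : Type*} [Fintype ι] [DecidableEq ι] {α : ι → Type*} [∀ i, Fintype (α i)]

theorem sum_pi_mul_prod_erase {R : Type*} [CommSemiring R] {p : ∀ i, α i → R} (i : ι)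
    (hp : ∀ j ≠ i, ∑ a, p j a = 1) (g : α i → R) :
    ∑ x : ∀ j, α j, g (x i) * ∏ j ∈ univ.erase i, p j (x j) = ∑ a, g a := by
  calc
    _ = ∑ x : ∀ j, α j, ∏ j, Function.update p i g j (x j) := by
      refine sum_congr rfl fun x _ => ?_
      simp only [Function.apply_update (fun j (h : α j → R) => h (x j)),
        prod_update_of_mem (mem_univ i), sdiff_singleton_eq_erase]
    _ = ∏ j, ∑ a, Function.update p i g j a := (Fintype.prod_sum _).symm
    _ = ∑ a, g a := by
      rw [Fintype.prod_eq_single i fun j hj => by rw [Function.update_of_ne hj, hp j hj],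
        Function.update_self]

theorem shannonEntropy_pi {p : ∀ i, α i → ℝ} (hp : ∀ i, ∑ a, p i a = 1) :
    shannonEntropy (fun x : ∀ i, α i => ∏ i, p i (x i)) = ∑ i, shannonEntropy (p i) := by
  simp only [shannonEntropy, negMulLog_prod]
  rw [sum_comm]
  exact sum_congr rfl fun i _ =>
    sum_pi_mul_prod_erase i (fun j _ => hp j) fun a => negMulLog (p i a)

end Entropy

section AbsorbingKernel

variable {S d : ℕ} {m : Fin S} {t : ℝ}

theorem absK_nonneg (ht : 0 ≤ t) (a b : Fin S) : 0 ≤ absK S m t a b := by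
  have exp_le_one : Real.exp (-t) ≤ 1 := Real.exp_le_one_iff.mpr (neg_nonpos.mpr ht)
  unfold absK
  split_ifs
  exacts [zero_le_one, (Real.exp_pos _).le, sub_nonneg.mpr exp_le_one, le_rfl]

theorem sum_comp_absK {M : Type*} [AddCommMonoid M] {f : ℝ → M} (hf : f 0 = 0) (a : Fin S) :
    ∑ b, f (absK S m t a b) =
      if a = m then f 1 else f (Real.exp (-t)) + f (1 - Real.exp (-t)) := by
  split_ifs with ha
  · rw [Fintype.sum_eq_single m fun b hb => by simp [absK, ha, hb, hb.symm, hf]]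
    simp [absK, ha]
  · rw [Fintype.sum_eq_add a m ha fun b hb => by simp [absK, hb.1.symm, hb.2, hf]]
    simp [absK, ha]

theorem sum_absK (a : Fin S) : ∑ b, absK S m t a b = 1 := by
  simpa using sum_comp_absK (m := m) (t := t) (f := id) rfl a

theorem shannonEntropy_absK (a : Fin S) :
    shannonEntropy (absK S m t a) = if a = m then 0 else binEntropy (Real.exp (-t)) := by
  rw [shannonEntropy, sum_comp_absK Real.negMulLog_zero, Real.negMulLog_one,
    Real.binEntropy_eq_negMulLog_add_negMulLog_one_sub]

theorem binEntropy_exp_neg (t : ℝ) :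
    binEntropy (Real.exp (-t)) =
      -(-t * Real.exp (-t) + (1 - Real.exp (-t)) * Real.log (1 - Real.exp (-t))) := by
  rw [Real.binEntropy_eq_negMulLog_add_negMulLog_one_sub, negMulLog, negMulLog, Real.log_exp]
  ring

/-- The law at time `t` of the sequence started at `x0`, each token evolving independently by
`absK`. -/
noncomputable def condFwd (S d : ℕ) (m : Fin S) (t : ℝ) (x0 : Fin d → Fin S) :
    (Fin d → Fin S) → ℝ :=
  fun x => ∏ i, absK S m t (x0 i) (x i)

theorem condFwd_nonneg (ht : 0 ≤ t) (x0 : Fin d → Fin S) : 0 ≤ condFwd S d m t x0 :=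
  fun _ => prod_nonneg fun _ _ => absK_nonneg ht _ _

theorem shannonEntropy_condFwd (x0 : Fin d → Fin S) :
    shannonEntropy (condFwd S d m t x0) = (d - nmask S d m x0) * binEntropy (Real.exp (-t)) := by
  have card_unmasked : (#{i | x0 i ≠ m} : ℝ) = d - nmask S d m x0 := by
    rw [eq_sub_iff_add_eq', nmask]
    exact_mod_cast (card_filter_add_card_filter_not (s := univ) fun i => x0 i = m).trans
      (card_fin d)
  calc
    _ = ∑ i, shannonEntropy (absK S m t (x0 i)) := shannonEntropy_pi fun i => sum_absK (x0 i)
    _ = ∑ i with x0 i ≠ m, binEntropy (Real.exp (-t)) := by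
      simp only [shannonEntropy_absK, sum_filter, ite_not]
    _ = _ := by rw [sum_const, nsmul_eq_mul, card_unmasked]

theorem fwd_eq_sum_smul_condFwd (q0 : (Fin d → Fin S) → ℝ) :
    fwd S d m q0 t = ∑ x0, q0 x0 • condFwd S d m t x0 := by
  ext x
  simp only [fwd, condFwd, Finset.sum_apply, Pi.smul_apply, smul_eq_mul]

theorem fwd_nonneg {q0 : (Fin d → Fin S) → ℝ} (hq0 : 0 ≤ q0) (ht : 0 ≤ t) :
    0 ≤ fwd S d m q0 t := by
  rw [fwd_eq_sum_smul_condFwd]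
  exact sum_nonneg fun x0 _ => smul_nonneg (hq0 x0) (condFwd_nonneg ht x0)

theorem sum_mul_shannonEntropy_condFwd_le {q0 : (Fin d → Fin S) → ℝ} (hq0 : 0 ≤ q0)
    (hq0sum : ∑ x, q0 x = 1) (ht : 0 ≤ t) :
    ∑ x0, q0 x0 * shannonEntropy (condFwd S d m t x0) ≤ shannonEntropy (fwd S d m q0 t) := by
  rw [fwd_eq_sum_smul_condFwd]
  exact concaveOn_shannonEntropy.le_map_sum (fun x0 _ => hq0 x0) hq0sum
    fun x0 _ => condFwd_nonneg ht x0

theorem sum_mul_nmask (q0 : (Fin d → Fin S) → ℝ) :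
    ∑ x0, q0 x0 * nmask S d m x0 = ∑ i, ∑ x0 with x0 i = m, q0 x0 := by
  simp only [nmask, natCast_card_filter, mul_sum, mul_ite, mul_one, mul_zero, sum_filter]
  exact sum_comm

theorem sum_mul_sub_nmask {q0 : (Fin d → Fin S) → ℝ} (hq0sum : ∑ x, q0 x = 1) :
    ∑ x0, q0 x0 * (d - nmask S d m x0) = ∑ i, (1 - ∑ x0 with x0 i = m, q0 x0) := by
  simp only [mul_sub, sum_sub_distrib, ← sum_mul, hq0sum, sum_mul_nmask, one_mul, sum_const,
    card_fin, nsmul_eq_mul, mul_one]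

end AbsorbingKernel

/-- Jensen-type bound on the negative entropy of the forward marginal. -/
theorem absorbing_neg_entropy_bound (S d : ℕ) (hS : 2 ≤ S) (hd : 1 ≤ d) (m : Fin S)
    (q0 : (Fin d → Fin S) → ℝ) (hq0 : ∀ x, 0 ≤ q0 x)
    (hq0sum : ∑ x : Fin d → Fin S, q0 x = 1) :
    ∀ t : ℝ, 0 ≤ t →
      ∑ x ∈ Finset.univ.filter (fun x : Fin d → Fin S => 0 < fwd S d m q0 t x),
          fwd S d m q0 t x * Real.log (fwd S d m q0 t x)
        ≤ (∑ i : Fin d,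
              (1 - ∑ x0 ∈ Finset.univ.filter (fun x0 : Fin d → Fin S => x0 i = m), q0 x0))
            * (-t * Real.exp (-t)
                + (1 - Real.exp (-t)) * Real.log (1 - Real.exp (-t))) := by
  intro t ht
  rw [sum_filter_pos_mul_log (fwd_nonneg hq0 ht), ← neg_le_neg_iff, neg_neg, ← mul_neg,
    ← binEntropy_exp_neg]
  calc
    _ = ∑ x0, q0 x0 * shannonEntropy (condFwd S d m t x0) := by
      simp only [shannonEntropy_condFwd, ← mul_assoc, ← sum_mul, sum_mul_sub_nmask hq0sum]
    _ ≤ shannonEntropy (fwd S d m q0 t) := sum_mul_shannonEntropy_condFwd_le hq0 hq0sum ht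
end
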